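/- arXiv:2109.00053 — 4 statements merged into one kernel-verified Lean document; each statement's English description precedes it below -/
import Mathlib

section
/- Let E and F be complex vector spaces, let σ : E → F be a real-linear map, and let ∂σ(v) = (1/2)·(σ(v) − i·σ(i·v)) and ∂̄σ(v) = (1/2)·(σ(v) + i·σ(i·v)) be its complex-linear and complex-antilinear parts. Let L ⊆ E and L' ⊆ F be complex lines, i.e. L is the ℂ-span of a nonzero vector v₀ ∈ E and L' is the ℂ-span of a nonzero vector w₀ ∈ F. If σ(L) ⊆ L', then for every real number t ∈ [0,1] the map H_σ^t := ∂σ + t·∂̄σ satisfies H_σ^t(L) ⊆ L'. -/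
/-- Lemma `constancia`: if a real-linear map σ sends the complex
line L = ℂ·v₀ into the complex line L' = ℂ·w₀, then for every t ∈ [0,1] the
map H_σ^t = ∂σ + t·∂̄σ of the canonical deformation also sends L into L'. -/
theorem canonical_deformation_preserves_lines
    (E F : Type*) [AddCommGroup E] [AddCommGroup F]
    [Module ℂ E] [Module ℂ F] [Module ℝ E] [Module ℝ F]
    [IsScalarTower ℝ ℂ E] [IsScalarTower ℝ ℂ F]
    (σ : E →ₗ[ℝ] F) (v₀ : E) (w₀ : F) (hv₀ : v₀ ≠ 0) (hw₀ : w₀ ≠ 0)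
    (hσ : ∀ v ∈ Submodule.span ℂ ({v₀} : Set E),
      σ v ∈ Submodule.span ℂ ({w₀} : Set F)) :
    ∀ t ∈ Set.Icc (0 : ℝ) 1, ∀ v ∈ Submodule.span ℂ ({v₀} : Set E),
      (1 / 2 : ℂ) • (σ v - Complex.I • σ (Complex.I • v))
        + t • ((1 / 2 : ℂ) • (σ v + Complex.I • σ (Complex.I • v)))
        ∈ Submodule.span ℂ ({w₀} : Set F) := by
  intro t _ v hv
  have h1 := hσ v hv
  have h2 := Submodule.smul_mem _ Complex.I (hσ _ (Submodule.smul_mem _ Complex.I hv))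
  exact Submodule.add_mem _ (Submodule.smul_mem _ _ (Submodule.sub_mem _ h1 h2))
    (Submodule.smul_of_tower_mem _ t (Submodule.smul_mem _ _ (Submodule.add_mem _ h1 h2)))
end

section
/- Let n ≥ 1 and let σ : ℂⁿ → ℂⁿ be a real-linear map whose determinant, as an ℝ-linear endomorphism of ℂⁿ (a real vector space of dimension 2n), is positive. Suppose there exist vectors v₁, …, v_{n−1} ∈ ℂⁿ that are linearly independent over ℂ, and for each j = 1, …, n−1 there exist a nonzero vector w_j ∈ ℂⁿ and complex numbers α_j, β_j with σ(v_j) = α_j·w_j, σ(i·v_j) = β_j·w_j, and Im(conj(α_j)·β_j) > 0 (i.e. σ maps the complex line ℂ·v_j onto the complex line ℂ·w_j preserving the natural orientations of complex lines). Then for every t ∈ [0,1], the real-linear map H_σ^t := ∂σ + t·∂̄σ has positive determinant as an ℝ-linear endomorphism of ℂⁿ; in particular each H_σ^t is a real-linear isomorphism. -/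
/-- The canonical deformation, as a real-linear map. -/
noncomputable def canonDeform {n : ℕ} (σ : (Fin n → ℂ) →ₗ[ℝ] (Fin n → ℂ)) (t : ℝ) :
    (Fin n → ℂ) →ₗ[ℝ] (Fin n → ℂ) where
  toFun u := (1 / 2 : ℂ) • (σ u - Complex.I • σ (Complex.I • u))
            + t • ((1 / 2 : ℂ) • (σ u + Complex.I • σ (Complex.I • u)))
  map_add' x y := by
    simp only [smul_add, map_add]
    ext i
    simp
    ring
  map_smul' r x := by
    have h : Complex.I • r • x = r • (Complex.I • x) := smul_comm _ _ _
    rw [h]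
    simp only [map_smul, RingHom.id_apply]
    ext i
    simp
    ring

theorem canonDeform_apply {n : ℕ} (σ : (Fin n → ℂ) →ₗ[ℝ] (Fin n → ℂ)) (t : ℝ) (u : Fin n → ℂ) :
    canonDeform σ t u = (1 / 2 : ℂ) • (σ u - Complex.I • σ (Complex.I • u))
            + t • ((1 / 2 : ℂ) • (σ u + Complex.I • σ (Complex.I • u))) := rfl

/-- Determinant of a block upper triangular real-linear map. -/
theorem det_blockTri {n : ℕ} (τ : (Fin n → ℂ) →ₗ[ℝ] (Fin n → ℂ))
    (h : ∀ j i : Fin n, j < i → ∀ z : ℂ, τ (Pi.single j z) i = 0) :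
    LinearMap.det τ = ∏ k, ((starRingEnd ℂ) (τ (Pi.single k 1) k) *
      τ (Pi.single k Complex.I) k).im := by
  classical
  let B := Pi.basis (fun _ : Fin n => Complex.basisOneI)
  rw [← LinearMap.det_toMatrix B]
  have hbt : (LinearMap.toMatrix B B τ).BlockTriangular (fun p => p.1) := by
    intro p q hpq
    rw [LinearMap.toMatrix_apply, Pi.basis_apply, Pi.basis_repr, h _ _ hpq]
    simp
  rw [hbt.det_fintype]
  refine Finset.prod_congr rfl fun k _ => ?_
  let e : Fin 2 ≃ {p : (Σ _ : Fin n, Fin 2) // p.1 = k} :=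
    { toFun := fun x => ⟨⟨k, x⟩, rfl⟩
      invFun := fun p => p.1.2
      left_inv := fun x => rfl
      right_inv := by
        rintro ⟨⟨a, b⟩, hab⟩
        simp only at hab
        subst hab
        rfl }
  rw [← Matrix.det_submatrix_equiv_self e, Matrix.det_fin_two]
  simp only [Matrix.submatrix_apply, Matrix.toSquareBlock_def, Matrix.of_apply,
    LinearMap.toMatrix_apply, e, Equiv.coe_fn_mk, B, Pi.basis_apply, Pi.basis_repr]
  simp
  ring

theorem im_deform_ge (α β : ℂ) (t : ℝ) (h0 : 0 ≤ t) (h1 : t ≤ 1) :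
    ((starRingEnd ℂ) α * β).im ≤
      ((starRingEnd ℂ) ((1 / 2 : ℂ) * (α - Complex.I * β) + t * ((1 / 2 : ℂ) * (α + Complex.I * β))) *
        ((1 / 2 : ℂ) * (β - Complex.I * (-α)) + t * ((1 / 2 : ℂ) * (β + Complex.I * (-α))))).im := by
  obtain ⟨a, b⟩ := α
  obtain ⟨c, d⟩ := β
  have h2 : (1 / 2 : ℂ) = ⟨1/2, 0⟩ := by apply Complex.ext <;> norm_num
  rw [h2]
  simp
  have : 0 ≤ (1 - t ^ 2) * ((a - d) ^ 2 + (b + c) ^ 2) :=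
    mul_nonneg (by nlinarith) (by positivity)
  nlinarith

theorem det_restrict_pos {n : ℕ} (P : (Fin n → ℂ) ≃ₗ[ℂ] (Fin n → ℂ)) :
    0 < LinearMap.det ((P : (Fin n → ℂ) →ₗ[ℂ] (Fin n → ℂ)).restrictScalars ℝ) := by
  rw [LinearMap.det_restrictScalars, Algebra.norm_complex_apply, Complex.normSq_pos]
  exact (LinearEquiv.isUnit_det' P).ne_zero

/-- The normalised statement: block triangular maps. -/
theorem deform_blockTri {m : ℕ} (τ : (Fin (m + 1) → ℂ) →ₗ[ℝ] (Fin (m + 1) → ℂ))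
    (hdet : 0 < LinearMap.det τ)
    (h : ∀ j i : Fin (m + 1), j < i → ∀ z : ℂ, τ (Pi.single j z) i = 0)
    (hpos : ∀ j : Fin m, 0 < ((starRingEnd ℂ) (τ (Pi.single j.castSucc 1) j.castSucc) *
      τ (Pi.single j.castSucc Complex.I) j.castSucc).im)
    (t : ℝ) (h0 : 0 ≤ t) (h1 : t ≤ 1) : 0 < LinearMap.det (canonDeform τ t) := by
  have hI : ∀ (k : Fin (m + 1)) (z : ℂ), Complex.I • (Pi.single k z : Fin (m + 1) → ℂ)
      = Pi.single k (Complex.I * z) := by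
    intro k z
    rw [← Pi.single_smul, smul_eq_mul]
  have hall : ∀ k, 0 < ((starRingEnd ℂ) (τ (Pi.single k 1) k) *
      τ (Pi.single k Complex.I) k).im := by
    rw [det_blockTri τ h, Fin.prod_univ_castSucc] at hdet
    have hp := Finset.prod_pos (fun j (_ : j ∈ Finset.univ) => hpos j)
    intro k
    refine Fin.lastCases ?_ hpos k
    exact (pos_iff_pos_of_mul_pos hdet).1 hp
  rw [det_blockTri]
  · refine Finset.prod_pos fun k _ => lt_of_lt_of_le (hall k) ?_
    refine (im_deform_ge _ _ t h0 h1).trans (le_of_eq ?_)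
    have hneg : τ (Pi.single k (-1)) = - τ (Pi.single k 1) := by
      rw [← map_neg, Pi.single_neg]
    simp only [canonDeform_apply, hI, mul_one, Complex.I_mul_I, hneg]
    simp
    ring
  · intro j i hji z
    simp only [canonDeform_apply, hI, Pi.add_apply, Pi.smul_apply, Pi.sub_apply, h j i hji]
    simp

theorem exists_basis_ext {m : ℕ} (v : Fin m → (Fin (m + 1) → ℂ)) (hv : LinearIndependent ℂ v) :
    ∃ b : Module.Basis (Fin (m + 1)) ℂ (Fin (m + 1) → ℂ), ∀ j : Fin m, b j.castSucc = v j := by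
  obtain ⟨x, hx⟩ := exists_linearIndependent_snoc_of_lt_finrank hv (by simp)
  refine ⟨basisOfLinearIndependentOfCardEqFinrank hx (by simp), fun j => ?_⟩
  simp

theorem map_cplx_smul {n : ℕ} (σ : (Fin n → ℂ) →ₗ[ℝ] (Fin n → ℂ)) (v w : Fin n → ℂ) (α β z : ℂ)
    (h1 : σ v = α • w) (h2 : σ (Complex.I • v) = β • w) :
    σ (z • v) = (z.re * α + z.im * β) • w := by
  have : z • v = z.re • v + z.im • (Complex.I • v) := by
    ext i
    simp only [Pi.smul_apply, Pi.add_apply, smul_eq_mul, Complex.real_smul]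
    conv_lhs => rw [← Complex.re_add_im z]
    ring
  rw [this, map_add, map_smul, map_smul, h1, h2]
  ext i
  simp
  ring

theorem solve_real (α β c : ℂ) (h : 0 < ((starRingEnd ℂ) α * β).im) :
    ∃ z : ℂ, z.re * α + z.im * β = c := by
  obtain ⟨a, b⟩ := α
  obtain ⟨p, q⟩ := β
  obtain ⟨x, y⟩ := c
  simp at h
  have hD : a * q - b * p ≠ 0 := by intro h'; linarith
  have e1 : (x * q - y * p) / (a * q - b * p) * a + (a * y - b * x) / (a * q - b * p) * p = x := by
    rw [div_mul_eq_mul_div, div_mul_eq_mul_div, ← add_div, div_eq_iff hD]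
    ring
  have e2 : (x * q - y * p) / (a * q - b * p) * b + (a * y - b * x) / (a * q - b * p) * q = y := by
    rw [div_mul_eq_mul_div, div_mul_eq_mul_div, ← add_div, div_eq_iff hD]
    ring
  generalize (x * q - y * p) / (a * q - b * p) = r at e1 e2
  generalize (a * y - b * x) / (a * q - b * p) = s at e1 e2
  refine ⟨⟨r, s⟩, ?_⟩
  apply Complex.ext
  · simpa using e1
  · simpa using e2


/-- Lemma `deformation`: let σ : ℂⁿ → ℂⁿ be a real-linear map
with positive determinant (as an ℝ-linear endomorphism of ℂⁿ). If there are
n−1 complex-linearly independent vectors v₁,…,v_{n−1} such that σ maps each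
complex line ℂ·v_j onto a complex line ℂ·w_j preserving the natural
orientations of complex lines, then for each t ∈ [0,1] the map
H_σ^t = ∂σ + t·∂̄σ has positive real determinant; in particular it is a
real-linear isomorphism. -/
theorem canonical_deformation_orientation_preserving
    (n : ℕ) (hn : 1 ≤ n)
    (σ : (Fin n → ℂ) →ₗ[ℝ] (Fin n → ℂ))
    (hdet : 0 < LinearMap.det σ)
    (v : Fin (n - 1) → (Fin n → ℂ))
    (hv : LinearIndependent ℂ v)
    (hlines : ∀ j : Fin (n - 1), ∃ (w : Fin n → ℂ) (α β : ℂ),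
      w ≠ 0 ∧ σ (v j) = α • w ∧ σ (Complex.I • v j) = β • w ∧
      0 < ((starRingEnd ℂ) α * β).im) :
    ∀ t ∈ Set.Icc (0 : ℝ) 1,
      ∃ H : (Fin n → ℂ) →ₗ[ℝ] (Fin n → ℂ),
        (∀ u : Fin n → ℂ,
          H u = (1 / 2 : ℂ) • (σ u - Complex.I • σ (Complex.I • u))
            + t • ((1 / 2 : ℂ) • (σ u + Complex.I • σ (Complex.I • u)))) ∧
        0 < LinearMap.det H ∧ Function.Bijective H := by
  obtain ⟨m, rfl⟩ : ∃ m, n = m + 1 := ⟨n - 1, by omega⟩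
  change Fin m → _ at v
  change ∀ j : Fin m, _ at hlines
  choose w α β hw h1 h2 h3 using hlines
  have hinj : Function.Injective σ :=
    (LinearMap.equivOfDetNeZero σ hdet.ne').injective
  have hwi : LinearIndependent ℂ w := by
    rw [Fintype.linearIndependent_iff]
    intro c hc
    choose z hz using fun j => solve_real (α j) (β j) (c j) (h3 j)
    have hs : σ (∑ j, z j • v j) = 0 := by
      rw [map_sum, ← hc]
      refine Finset.sum_congr rfl fun j _ => ?_
      rw [map_cplx_smul σ _ _ _ _ _ (h1 j) (h2 j), hz]
    have hs0 : ∑ j, z j • v j = 0 := hinj (by rw [hs, map_zero])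
    have hz0 := Fintype.linearIndependent_iff.1 hv z hs0
    intro j
    rw [← hz j, hz0 j]
    simp
  obtain ⟨b, hb⟩ := exists_basis_ext v hv
  obtain ⟨c, hc⟩ := exists_basis_ext w hwi
  let P : (Fin (m + 1) → ℂ) ≃ₗ[ℂ] (Fin (m + 1) → ℂ) := c.equivFun
  let Q : (Fin (m + 1) → ℂ) ≃ₗ[ℂ] (Fin (m + 1) → ℂ) := b.equivFun.symm
  let P' := (P : (Fin (m + 1) → ℂ) →ₗ[ℂ] (Fin (m + 1) → ℂ)).restrictScalars ℝ
  let Q' := (Q : (Fin (m + 1) → ℂ) →ₗ[ℂ] (Fin (m + 1) → ℂ)).restrictScalars ℝ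
  have hP : 0 < LinearMap.det P' := det_restrict_pos P
  have hQ : 0 < LinearMap.det Q' := det_restrict_pos Q
  let τ := P' ∘ₗ σ ∘ₗ Q'
  have hτdet : 0 < LinearMap.det τ := by
    simp only [τ, LinearMap.det_comp]
    positivity
  have hτ : ∀ (j : Fin m) (z : ℂ), τ (Pi.single j.castSucc z)
      = Pi.single j.castSucc (z.re * α j + z.im * β j) := by
    intro j z
    have hq : Q' (Pi.single j.castSucc z) = z • v j := by
      change b.equivFun.symm _ = _
      rw [Module.Basis.equivFun_symm_apply, Finset.sum_eq_single j.castSucc]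
      · simp [hb]
      · intro i _ hi
        simp [hi]
      · simp
    have hp : P' (w j) = Pi.single j.castSucc 1 := by
      change c.equivFun _ = _
      ext i
      rw [← hc, Module.Basis.equivFun_self]
      simp [Pi.single_apply, eq_comm]
    have hp2 : ∀ y : ℂ, P' (y • w j) = y • P' (w j) := fun y => P.map_smul y _
    change P' (σ (Q' _)) = _
    rw [hq, map_cplx_smul σ _ _ _ _ _ (h1 j) (h2 j), hp2, hp, ← Pi.single_smul]
    simp
  intro t ht
  have key := deform_blockTri τ hτdet (by
      intro j i hji z
      have hj : j ≠ Fin.last m := (lt_of_lt_of_le hji (Fin.le_last i)).ne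
      obtain ⟨j', rfl⟩ := Fin.exists_castSucc_eq.2 hj
      rw [hτ, Pi.single_eq_of_ne hji.ne']) (by
      intro j
      rw [hτ, hτ]
      simpa using h3 j) t ht.1 ht.2
  have hcomp : canonDeform τ t = P' ∘ₗ canonDeform σ t ∘ₗ Q' := by
    have hpc : ∀ (y : ℂ) x, P' (y • x) = y • P' x := fun y x => P.map_smul y x
    have hqc : ∀ (y : ℂ) x, Q' (y • x) = y • Q' x := fun y x => Q.map_smul y x
    refine LinearMap.ext fun u => ?_
    simp only [LinearMap.comp_apply, canonDeform_apply, τ, map_add, map_sub, map_smul, hpc, hqc]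
  have hpos : 0 < LinearMap.det (canonDeform σ t) := by
    rw [hcomp, LinearMap.det_comp, LinearMap.det_comp] at key
    exact pos_of_mul_pos_left (pos_of_mul_pos_right key hP.le) hQ.le
  exact ⟨canonDeform σ t, canonDeform_apply σ t, hpos,
    (LinearMap.equivOfDetNeZero _ hpos.ne').bijective⟩
end

section
/- Let n ≥ 1 and let σ : ℂⁿ → ℂⁿ be a real-linear map whose determinant, as an ℝ-linear endomorphism of ℂⁿ, is positive. Suppose there exist vectors v₁, …, v_{n−1} ∈ ℂⁿ that are linearly independent over ℂ, and for each j = 1, …, n−1 there exist a nonzero vector w_j ∈ ℂⁿ and complex numbers α_j, β_j with σ(v_j) = α_j·w_j, σ(i·v_j) = β_j·w_j, and Im(conj(α_j)·β_j) > 0. Then the complex-linear part ∂σ, defined by ∂σ(v) = (1/2)·(σ(v) − i·σ(i·v)), is a complex-linear isomorphism of ℂⁿ. -/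
open Complex in
lemma aux_solve (α β c : ℂ) (h : 0 < ((starRingEnd ℂ) α * β).im) :
    ∃ p q : ℝ, c = (p : ℂ) * α + (q : ℂ) * β := by
  have hD : α.re * β.im - α.im * β.re ≠ 0 := by
    simp at h
    intro h0
    linarith
  refine ⟨(c.re * β.im - c.im * β.re) / (α.re * β.im - α.im * β.re),
    (α.re * c.im - α.im * c.re) / (α.re * β.im - α.im * β.re), ?_⟩
  apply Complex.ext
  · simp only [add_re, mul_re, ofReal_re, ofReal_im, zero_mul, sub_zero]
    rw [div_mul_eq_mul_div, div_mul_eq_mul_div, ← add_div, eq_div_iff hD]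
    ring
  · simp only [add_im, mul_im, ofReal_re, ofReal_im, zero_mul, add_zero]
    rw [div_mul_eq_mul_div, div_mul_eq_mul_div, ← add_div, eq_div_iff hD]
    ring

lemma aux_smul {V : Type*} [AddCommGroup V] [Module ℂ V] (σ : V →ₗ[ℝ] V) (x : ℂ) (u : V) :
    σ (x • u) = (x.re : ℂ) • σ u + (x.im : ℂ) • σ (Complex.I • u) := by
  have : x • u = x.re • u + x.im • (Complex.I • u) := by
    conv_lhs => rw [← Complex.re_add_im x]
    rw [add_smul, mul_smul]
    simp
  rw [this, map_add, map_smul, map_smul]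
  simp

lemma aux_indep {V : Type*} [AddCommGroup V] [Module ℂ V] (σ : V →ₗ[ℝ] V)
    (hσ : Function.Injective σ) {m : ℕ} (v w : Fin m → V) (α β : Fin m → ℂ)
    (hv : LinearIndependent ℂ v) (hw : ∀ j, w j ≠ 0)
    (h1 : ∀ j, σ (v j) = α j • w j) (h2 : ∀ j, σ (Complex.I • v j) = β j • w j)
    (h3 : ∀ j, 0 < ((starRingEnd ℂ) (α j) * β j).im) : LinearIndependent ℂ w := by
  rw [Fintype.linearIndependent_iff]
  intro c hc
  choose p q hpq using fun j => aux_solve (α j) (β j) (c j) (h3 j)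
  have key : ∀ j, σ ((⟨p j, q j⟩ : ℂ) • v j) = c j • w j := by
    intro j
    rw [aux_smul, h1, h2, hpq j, add_smul, mul_smul, mul_smul]
  have h0 : ∑ j, (⟨p j, q j⟩ : ℂ) • v j = 0 := by
    apply hσ
    rw [map_sum, map_zero, ← hc]
    exact Finset.sum_congr rfl fun j _ => key j
  intro j
  have hx := Fintype.linearIndependent_iff.1 hv _ h0 j
  have hk := key j
  rw [hx, zero_smul, map_zero] at hk
  exact (smul_eq_zero.1 hk.symm).resolve_right (hw j)

lemma aux_det {V : Type*} [AddCommGroup V] [Module ℂ V] {m : ℕ}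
    (b : Module.Basis (Fin m) ℂ V) (τ : V →ₗ[ℝ] V)
    (h1 : ∀ i j, j < i → b.repr (τ (b j)) i = 0)
    (h2 : ∀ i j, j < i → b.repr (τ (Complex.I • b j)) i = 0) :
    LinearMap.det τ = ∏ j, ((starRingEnd ℂ) (b.repr (τ (b j)) j) *
      b.repr (τ (Complex.I • b j)) j).im := by
  classical
  let B := Complex.basisOneI.smulTower b
  rw [← LinearMap.det_toMatrix B]
  have hB : ∀ x y, LinearMap.toMatrix B B τ x y =
      Complex.basisOneI.repr (b.repr (τ (Complex.basisOneI y.1 • b y.2)) x.2) x.1 := by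
    intro x y
    rw [LinearMap.toMatrix_apply, Module.Basis.smulTower_repr, Module.Basis.smulTower_apply]
  have ht : (LinearMap.toMatrix B B τ).BlockTriangular Prod.snd := by
    rintro ⟨i, x⟩ ⟨j, y⟩ hxy
    rw [hB]
    simp only at hxy ⊢
    fin_cases j
    · simp [h1 x y hxy]
    · simp [h2 x y hxy]
  rw [ht.det_fintype]
  refine Finset.prod_congr rfl fun k _ => ?_
  let e : Fin 2 ≃ {a : Fin 2 × Fin m // a.2 = k} :=
    { toFun := fun i => ⟨(i, k), rfl⟩
      invFun := fun a => a.1.1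
      left_inv := fun i => rfl
      right_inv := by rintro ⟨⟨i, x⟩, rfl⟩; rfl }
  rw [← Matrix.det_submatrix_equiv_self e, Matrix.det_fin_two]
  simp only [Matrix.submatrix_apply, Matrix.toSquareBlock_def, Matrix.of_apply, hB, e,
    Equiv.coe_fn_mk]
  simp
  ring

lemma aux_diag (α β : ℂ) (h : 0 < ((starRingEnd ℂ) α * β).im) : α - Complex.I * β ≠ 0 := by
  intro h0
  have : α = Complex.I * β := sub_eq_zero.1 h0
  subst this
  simp at h
  nlinarith [sq_nonneg β.re, sq_nonneg β.im]

/-- the complex-linear part as a linear map -/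
noncomputable def auxPart {V : Type*} [AddCommGroup V] [Module ℂ V] (σ : V →ₗ[ℝ] V) :
    V →ₗ[ℂ] V where
  toFun u := (1 / 2 : ℂ) • (σ u - Complex.I • σ (Complex.I • u))
  map_add' x y := by
    simp only [smul_add, map_add]
    module
  map_smul' c x := by
    have h : Complex.I • c • x = (Complex.I * c) • x := smul_smul _ _ _
    rw [h, aux_smul σ c x, aux_smul σ (Complex.I * c) x]
    simp only [RingHom.id_apply, Complex.mul_re, Complex.mul_im, Complex.I_re, Complex.I_im]
    conv_rhs => rw [← Complex.re_add_im c]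
    push_cast
    match_scalars
    · ring_nf
    · ring_nf
      simp only [Complex.I_sq]
      ring

lemma aux_main {V : Type*} [AddCommGroup V] [Module ℂ V] {m : ℕ}
    (b : Module.Basis (Fin (m + 1)) ℂ V) (τ : V →ₗ[ℝ] V) (hdet : 0 < LinearMap.det τ)
    (α β : Fin m → ℂ)
    (h1 : ∀ j : Fin m, τ (b j.castSucc) = α j • b j.castSucc)
    (h2 : ∀ j : Fin m, τ (Complex.I • b j.castSucc) = β j • b j.castSucc)
    (h3 : ∀ j, 0 < ((starRingEnd ℂ) (α j) * β j).im) :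
    Function.Bijective (auxPart τ) := by
  have t1 : ∀ i j, j < i → b.repr (τ (b j)) i = 0 := by
    intro i j hij
    obtain ⟨j, rfl⟩ := Fin.exists_castSucc_eq.2 (Fin.ne_last_of_lt hij)
    simp [h1, hij.ne]
  have t2 : ∀ i j, j < i → b.repr (τ (Complex.I • b j)) i = 0 := by
    intro i j hij
    obtain ⟨j, rfl⟩ := Fin.exists_castSucc_eq.2 (Fin.ne_last_of_lt hij)
    simp [h2, hij.ne]
  have hd := aux_det b τ t1 t2
  rw [Fin.prod_univ_castSucc] at hd
  have hp : 0 < ∏ j : Fin m, ((starRingEnd ℂ) (b.repr (τ (b j.castSucc)) j.castSucc) *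
      b.repr (τ (Complex.I • b j.castSucc)) j.castSucc).im := by
    refine Finset.prod_pos fun j _ => ?_
    rw [h1, h2]
    simpa using h3 j
  rw [hd] at hdet
  have hl := (mul_pos_iff_of_pos_left hp).1 hdet
  have hall : ∀ j, 0 < ((starRingEnd ℂ) (b.repr (τ (b j)) j) *
      b.repr (τ (Complex.I • b j)) j).im := by
    intro j
    refine Fin.lastCases hl (fun j => ?_) j
    rw [h1, h2]
    simpa using h3 j
  have hM : ∀ i j, LinearMap.toMatrix b b (auxPart τ) i j =
      (1 / 2 : ℂ) * (b.repr (τ (b j)) i - Complex.I * b.repr (τ (Complex.I • b j)) i) := by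
    intro i j
    rw [LinearMap.toMatrix_apply]
    simp [auxPart]
  have hdet' : LinearMap.det (auxPart τ) ≠ 0 := by
    rw [← LinearMap.det_toMatrix b, Matrix.det_of_isUpperTriangular]
    · refine Finset.prod_ne_zero_iff.2 fun j _ => ?_
      rw [hM]
      exact mul_ne_zero (by norm_num) (aux_diag _ _ (hall j))
    · intro i j hij
      rw [hM, t1 i j hij, t2 i j hij]
      simp
  have : FiniteDimensional ℂ V := b.finiteDimensional_of_finite
  exact (LinearMap.equivOfDetNeZero _ hdet').bijective

/-- under the hypotheses of Lemma `deformation`, the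
complex-linear part ∂σ, ∂σ(v) = (1/2)·(σ(v) − i·σ(i·v)), is a complex-linear
isomorphism of ℂⁿ. -/
theorem holomorphic_part_is_complex_isomorphism
    (n : ℕ) (hn : 1 ≤ n)
    (σ : (Fin n → ℂ) →ₗ[ℝ] (Fin n → ℂ))
    (hdet : 0 < LinearMap.det σ)
    (v : Fin (n - 1) → (Fin n → ℂ))
    (hv : LinearIndependent ℂ v)
    (hlines : ∀ j : Fin (n - 1), ∃ (w : Fin n → ℂ) (α β : ℂ),
      w ≠ 0 ∧ σ (v j) = α • w ∧ σ (Complex.I • v j) = β • w ∧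
      0 < ((starRingEnd ℂ) α * β).im) :
    IsLinearMap ℂ (fun u : Fin n → ℂ =>
      (1 / 2 : ℂ) • (σ u - Complex.I • σ (Complex.I • u))) ∧
    Function.Bijective (fun u : Fin n → ℂ =>
      (1 / 2 : ℂ) • (σ u - Complex.I • σ (Complex.I • u))) := by
  refine ⟨(auxPart σ).isLinear, ?_⟩
  change Function.Bijective (auxPart σ)
  obtain ⟨m, rfl⟩ : ∃ m, n = m + 1 := ⟨n - 1, by omega⟩
  change Fin m → _ at v
  choose w α β hw h1 h2 h3 using hlines
  change Fin m → _ at w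
  change Fin m → ℂ at α β
  have hinj : Function.Injective σ :=
    (LinearMap.equivOfDetNeZero σ hdet.ne').injective
  have hwi : LinearIndependent ℂ w := aux_indep σ hinj v w α β hv hw h1 h2 h3
  have ext : ∀ u : Fin m → (Fin (m + 1) → ℂ), LinearIndependent ℂ u →
      ∃ b : Module.Basis (Fin (m + 1)) ℂ (Fin (m + 1) → ℂ), ∀ j : Fin m, b j.castSucc = u j := by
    intro u hu
    have hne : Submodule.span ℂ (Set.range u) ≠ ⊤ := by
      intro htop
      have := finrank_span_eq_card hu
      rw [htop, finrank_top] at this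
      simp at this
    obtain ⟨x, hx⟩ : ∃ x, x ∉ Submodule.span ℂ (Set.range u) := by
      by_contra! hcon
      exact hne (eq_top_iff.2 fun x _ => hcon x)
    have hli : LinearIndependent ℂ (Fin.snoc u x : Fin (m + 1) → (Fin (m + 1) → ℂ)) :=
      linearIndependent_finSnoc.2 ⟨hu, hx⟩
    refine ⟨basisOfLinearIndependentOfCardEqFinrank hli (by simp), fun j => ?_⟩
    rw [coe_basisOfLinearIndependentOfCardEqFinrank, Fin.snoc_castSucc]
  obtain ⟨bv, hbv⟩ := ext v hv
  obtain ⟨bw, hbw⟩ := ext w hwi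
  let P : (Fin (m + 1) → ℂ) ≃ₗ[ℂ] (Fin (m + 1) → ℂ) := bw.equiv bv (Equiv.refl _)
  have hP : ∀ j : Fin m, P (w j) = v j := by
    intro j
    rw [← hbw, ← hbv]
    simp [P]
  let PR : (Fin (m + 1) → ℂ) →ₗ[ℝ] (Fin (m + 1) → ℂ) := (P : _ →ₗ[ℂ] _).restrictScalars ℝ
  have hPdet : 0 < LinearMap.det PR := by
    rw [LinearMap.det_restrictScalars, Algebra.norm_complex_apply]
    exact Complex.normSq_pos.2 (LinearEquiv.isUnit_det' P).ne_zero
  have hb := aux_main bw (σ ∘ₗ PR) (by rw [LinearMap.det_comp]; exact mul_pos hdet hPdet) α β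
    (fun j => by rw [hbw, ← h1 j, ← hP j]; rfl)
    (fun j => by
      rw [hbw, ← h2 j, ← hP j, ← map_smul]; rfl) h3
  have hc : (auxPart (σ ∘ₗ PR) : _ → _) = auxPart σ ∘ P := by
    funext u
    simp [auxPart, PR]
  rw [hc] at hb
  exact (Function.Bijective.of_comp_iff _ P.bijective).1 hb
end

section
/- The quotient of the formal power series ring ℂ[[u,v]] in two variables by the ideal generated by u² − u·v² and u² − v³ is a complex vector space of dimension 6, i.e. dim_ℂ ℂ[[u,v]]/(u² − u·v², u² − v³) = 6. -/
open MvPowerSeries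

/-- The coefficient of `u^i v^j`. -/
noncomputable def cf (i j : ℕ) : MvPowerSeries (Fin 2) ℂ →ₗ[ℂ] ℂ :=
  coeff (Finsupp.single 0 i + Finsupp.single 1 j)

lemma cf_X0_succ (i j : ℕ) (f : MvPowerSeries (Fin 2) ℂ) :
    cf (i + 1) j (X 0 * f) = cf i j f := by
  have h : (Finsupp.single 0 (i + 1) + Finsupp.single 1 j : Fin 2 →₀ ℕ)
      = Finsupp.single 0 1 + (Finsupp.single 0 i + Finsupp.single 1 j) := by
    ext k; fin_cases k <;> simp [add_comm]
  rw [cf, h, X, coeff_add_monomial_mul, one_mul, cf]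

lemma cf_X1_succ (i j : ℕ) (f : MvPowerSeries (Fin 2) ℂ) :
    cf i (j + 1) (X 1 * f) = cf i j f := by
  have h : (Finsupp.single 0 i + Finsupp.single 1 (j + 1) : Fin 2 →₀ ℕ)
      = Finsupp.single 1 1 + (Finsupp.single 0 i + Finsupp.single 1 j) := by
    ext k; fin_cases k <;> simp [add_comm]
  rw [cf, h, X, coeff_add_monomial_mul, one_mul, cf]

lemma cf_X0_zero (j : ℕ) (f : MvPowerSeries (Fin 2) ℂ) :
    cf 0 j (X 0 * f) = 0 :=
  X_dvd_iff.1 (Dvd.intro _ rfl) _ (by simp)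

lemma cf_X1_zero (i : ℕ) (f : MvPowerSeries (Fin 2) ℂ) :
    cf i 0 (X 1 * f) = 0 :=
  X_dvd_iff.1 (Dvd.intro _ rfl) _ (by simp)

lemma cf_one (i j : ℕ) : cf i j 1 = if i = 0 ∧ j = 0 then 1 else 0 := by
  classical
  rw [cf, coeff_one]
  congr 1
  simp [Finsupp.ext_iff, Fin.forall_fin_two]

/-- `p` only involves the variable `v`. -/
def OnlyV (p : MvPowerSeries (Fin 2) ℂ) : Prop := ∀ n : Fin 2 →₀ ℕ, n 0 ≠ 0 → coeff n p = 0

lemma split0 (f : MvPowerSeries (Fin 2) ℂ) : ∃ p g, OnlyV p ∧ f = p + X 0 * g := by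
  classical
  let p : MvPowerSeries (Fin 2) ℂ := fun n => if n 0 = 0 then coeff n f else 0
  have hp : ∀ n, coeff n p = if n 0 = 0 then coeff n f else 0 := fun n => rfl
  have : X 0 ∣ f - p := by
    rw [X_dvd_iff]
    intro m hm
    simp [hp, hm]
  obtain ⟨g, hg⟩ := this
  exact ⟨p, g, fun n hn => by simp [hp, hn], by rw [← hg]; ring⟩

lemma split1 (p : MvPowerSeries (Fin 2) ℂ) (h : OnlyV p) :
    ∃ (c : ℂ) (q : MvPowerSeries (Fin 2) ℂ), OnlyV q ∧ p = c • 1 + X 1 * q := by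
  classical
  have : X 1 ∣ p - (coeff 0 p) • 1 := by
    rw [X_dvd_iff]
    intro m hm
    by_cases h0 : m 0 = 0
    · have : m = 0 := by ext k; fin_cases k <;> simp [h0, hm]
      subst this; simp
    · have : m ≠ 0 := by rintro rfl; simp at h0
      simp [h m h0, coeff_one, this]
  obtain ⟨q, hq⟩ := this
  refine ⟨_, q, fun n hn => ?_, by rw [← hq]; ring⟩
  have h1 : coeff (Finsupp.single 1 1 + n) (X 1 * q) = coeff n q := by
    rw [X, coeff_add_monomial_mul, one_mul]
  have h2 : (Finsupp.single 1 1 + n : Fin 2 →₀ ℕ) ≠ 0 := by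
    intro h; have := DFunLike.congr_fun h 0; simp at this; exact hn this
  rw [← h1, ← hq, map_sub, h _ (by simpa using hn)]
  simp [coeff_one, h2]

/-- The ideal. -/
noncomputable abbrev II : Ideal (MvPowerSeries (Fin 2) ℂ) :=
  Ideal.span ({X 0 ^ 2 - X 0 * X 1 ^ 2, X 0 ^ 2 - X 1 ^ 3} : Set (MvPowerSeries (Fin 2) ℂ))

/-- The normal form. -/
noncomputable def nf : (Fin 6 → ℂ) →ₗ[ℂ] MvPowerSeries (Fin 2) ℂ :=
  Fintype.linearCombination ℂ ![1, X 0 * 1, X 1 * 1, X 0 * (X 1 * 1), X 1 * (X 1 * 1),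
    X 1 * (X 1 * (X 1 * 1))]

lemma nf_apply (c : Fin 6 → ℂ) : nf c = c 0 • 1 + c 1 • (X 0 * 1) + c 2 • (X 1 * 1)
    + c 3 • (X 0 * (X 1 * 1)) + c 4 • (X 1 * (X 1 * 1)) + c 5 • (X 1 * (X 1 * (X 1 * 1))) := by
  simp [nf, Fintype.linearCombination_apply, Fin.sum_univ_six]

lemma nf_inj (c : Fin 6 → ℂ) (h : nf c ∈ II) : c = 0 := by
  obtain ⟨a, b, hab⟩ := Ideal.mem_span_pair.1 h
  have e : X 0 * (X 0 * a) - X 0 * (X 1 * (X 1 * a)) + X 0 * (X 0 * b) - X 1 * (X 1 * (X 1 * b))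
      = nf c := by rw [← hab]; ring
  rw [nf_apply] at e
  have key := fun i j => congrArg (cf i j) e
  have h00 := key 0 0
  have h10 := key 1 0
  have h01 := key 0 1
  have h11 := key 1 1
  have h02 := key 0 2
  have h03 := key 0 3
  have h12 := key 1 2
  have h20 := key 2 0
  have s0 : ∀ j f, cf 1 j (X 0 * f) = cf 0 j f := fun j f => cf_X0_succ 0 j f
  have s1 : ∀ j f, cf 2 j (X 0 * f) = cf 1 j f := fun j f => cf_X0_succ 1 j f
  have t0 : ∀ j f, cf j 1 (X 1 * f) = cf j 0 f := fun j f => cf_X1_succ j 0 f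
  have t1 : ∀ j f, cf j 2 (X 1 * f) = cf j 1 f := fun j f => cf_X1_succ j 1 f
  have t2 : ∀ j f, cf j 3 (X 1 * f) = cf j 2 f := fun j f => cf_X1_succ j 2 f
  simp only [map_add, map_sub, map_smul, s0, s1, t0, t1, t2, cf_X0_zero, cf_X1_zero, cf_one]
    at h00 h10 h01 h11 h02 h03 h12 h20
  norm_num at h00 h10 h01 h11 h02 h03 h12 h20
  have h5 : c 5 = 0 := by linear_combination -h03 + h12 - h20
  ext k
  fin_cases k <;> simp_all

lemma nf_surj (f : MvPowerSeries (Fin 2) ℂ) : ∃ c, f - nf c ∈ II := by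
  obtain ⟨p0, f1, hp0, rfl⟩ := split0 f
  obtain ⟨p1, f2, hp1, rfl⟩ := split0 f1
  obtain ⟨p2, f3, hp2, rfl⟩ := split0 f2
  obtain ⟨a0, q1, k1, rfl⟩ := split1 p0 hp0
  obtain ⟨a1, q2, k2, rfl⟩ := split1 q1 k1
  obtain ⟨a2, q3, k3, rfl⟩ := split1 q2 k2
  obtain ⟨a3, A, -, rfl⟩ := split1 q3 k3
  obtain ⟨b0, r1, l1, rfl⟩ := split1 p1 hp1
  obtain ⟨b1, r2, l2, rfl⟩ := split1 r1 l1
  obtain ⟨b2, B, -, rfl⟩ := split1 r2 l2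
  obtain ⟨c0, D, hq, rfl⟩ := split1 p2 hp2
  have g1 : (X 0 ^ 2 - X 0 * X 1 ^ 2 : MvPowerSeries (Fin 2) ℂ) ∈ II :=
    Ideal.subset_span (by simp)
  have g2 : (X 0 ^ 2 - X 1 ^ 3 : MvPowerSeries (Fin 2) ℂ) ∈ II :=
    Ideal.subset_span (by simp)
  have g3 : (X 0 * X 1 ^ 2 - X 1 ^ 3 : MvPowerSeries (Fin 2) ℂ) ∈ II := by
    have := II.sub_mem g2 g1
    convert this using 1; ring
  have hu : IsUnit (1 - X 1 : MvPowerSeries (Fin 2) ℂ) := by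
    rw [isUnit_iff_constantCoeff]; simp
  have v4 : (X 1 ^ 4 : MvPowerSeries (Fin 2) ℂ) ∈ II := by
    rw [← Ideal.mul_unit_mem_iff_mem _ hu]
    have := II.add_mem (II.sub_mem (II.mul_mem_left (X 0) g3) (II.mul_mem_left (X 1 ^ 2) g2))
      (II.mul_mem_left (X 1) g3)
    -- u²v² - uv³ - u²v² + v⁵ + uv³ - v⁴
    have := II.neg_mem this
    convert this using 1; ring
  have uv3 : (X 0 * X 1 ^ 3 : MvPowerSeries (Fin 2) ℂ) ∈ II := by
    have := II.add_mem (II.mul_mem_left (X 1) g3) v4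
    convert this using 1; ring
  have u2v : (X 0 ^ 2 * X 1 : MvPowerSeries (Fin 2) ℂ) ∈ II := by
    have := II.add_mem (II.mul_mem_left (X 1) g2) v4
    convert this using 1; ring
  have u3 : (X 0 ^ 3 : MvPowerSeries (Fin 2) ℂ) ∈ II := by
    have := II.add_mem (II.mul_mem_left (X 0) g2) uv3
    convert this using 1; ring
  refine ⟨![a0, b0, a1, b1, a2, a3 + b2 + c0], ?_⟩
  have := II.add_mem (II.add_mem (II.add_mem (II.mul_mem_left A v4) (II.mul_mem_left B uv3))
    (II.add_mem (II.mul_mem_left D u2v) (II.mul_mem_left f3 u3)))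
    (II.add_mem (II.mul_mem_left (C b2) g3) (II.mul_mem_left (C c0) g2))
  convert this using 1
  rw [nf_apply]
  simp [smul_eq_C_mul]
  ring

/-- dim_ℂ ℂ[[u,v]]/(u² − u·v², u² − v³) = 6, the local
intersection multiplicity at the origin of the curves u² − u·v² = 0 and
u² − v³ = 0. -/
theorem finrank_quotient_power_series_eq_six :
    Module.finrank ℂ
      (MvPowerSeries (Fin 2) ℂ ⧸
        Ideal.span ({X 0 ^ 2 - X 0 * X 1 ^ 2, X 0 ^ 2 - X 1 ^ 3} :
          Set (MvPowerSeries (Fin 2) ℂ)))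
      = 6 := by
  let ψ : (Fin 6 → ℂ) →ₗ[ℂ] (MvPowerSeries (Fin 2) ℂ ⧸ II) :=
    (Ideal.Quotient.mkₐ ℂ II).toLinearMap ∘ₗ nf
  have hψ : ∀ c, ψ c = Ideal.Quotient.mk II (nf c) := fun c => rfl
  have hb : Function.Bijective ψ := by
    constructor
    · rw [← LinearMap.ker_eq_bot, LinearMap.ker_eq_bot']
      intro c hc
      rw [hψ, Ideal.Quotient.eq_zero_iff_mem] at hc
      exact nf_inj c hc
    · intro x
      obtain ⟨f, rfl⟩ := Ideal.Quotient.mk_surjective x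
      obtain ⟨c, hc⟩ := nf_surj f
      exact ⟨c, by rw [hψ]; exact (Ideal.Quotient.eq.2 hc).symm⟩
  have := (LinearEquiv.ofBijective ψ hb).finrank_eq
  rw [← this]
  simp
end
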